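/- arXiv:2507.12847 — 3 statements merged into one kernel-verified Lean document; each statement's English description precedes it below -/
import Mathlib

section
/- For every nonzero vector x ∈ {0,±1}^V, letting L = {i ∈ V : x_i = 1}, R = {i ∈ V : x_i = −1} and S := L⁺ ∪ R⁻ ⊆ V', one has β_b(x) = w(E'(S, V'∖S)) / b(S). Consequently, β_b(G) equals the minimum, over all pairs of disjoint subsets L, R ⊆ V with L ∪ R ≠ ∅ and S := L⁺ ∪ R⁻, of w(E'(S, V'∖S)) / b(S). -/
/-!
Write `L = {i : x i = 1}`, `R = {i : x i = -1}`, `S = L⁺ ∪ R⁻`. The denominators agree because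
`|x i| = [i ∈ L] + [i ∈ R]`. For the numerators, the cut weight is
`Σ_{i,j} w i j * ([i ∈ L][j ∉ R] + [i ∈ R][j ∉ L])`. Averaging this double sum with its transpose,
which is legitimate since `w` is symmetric, replaces the bracket by half of
`[i ∈ L][j ∉ R] + [i ∈ R][j ∉ L] + [j ∈ L][i ∉ R] + [j ∈ R][i ∉ L]`, and a check of the nine
possible values of `(x i, x j)` shows that this four-term sum is `|x i + x j|`.
The two minima then run over the same set of values, since `x ↦ (L, R)` is a bijection from
nonzero sign vectors to pairs of disjoint sets, not both empty.
-/

open Finset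

/-- Edge weights of the auxiliary bipartite graph `G'` on `V⁺ ⊕ V⁻`:
for each edge `{i,j}` of `G` there are edges `{i⁺, j⁻}` and `{i⁻, j⁺}` of weight `w i j`. -/
noncomputable def auxW {V : Type*} (w : V → V → ℝ) : V ⊕ V → V ⊕ V → ℝ
  | Sum.inl i, Sum.inr j => w i j
  | Sum.inr i, Sum.inl j => w i j
  | _, _ => 0

/-- Vertex weights on `V' = V⁺ ⊕ V⁻` induced by `b`: `b(i⁺) = b(i⁻) = b(i)`. -/
noncomputable def auxB {V : Type*} (b : V → ℝ) : V ⊕ V → ℝ := Sum.elim b b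

/-- `β_b(x) = (Σ_{{i,j}∈E} w({i,j})·|x_i+x_j|) / (Σ_i b(i)·|x_i|)`, where the sum over
unordered edges is written as half the sum over ordered pairs. -/
noncomputable def betaB {V : Type*} [Fintype V] (w : V → V → ℝ) (b : V → ℝ) (x : V → ℝ) : ℝ :=
  ((1 / 2) * ∑ i, ∑ j, w i j * |x i + x j|) / (∑ i, b i * |x i|)

/-- `w(E'(S, V'∖S))`: total weight of the edges of the auxiliary graph crossing the cut `S`.
Since `G'` has edges only between `V⁺` and `V⁻`, each crossing edge is counted exactly once. -/
noncomputable def cutW {V : Type*} [Fintype V] [DecidableEq V] (w : V → V → ℝ)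
    (S : Finset (V ⊕ V)) : ℝ :=
  ∑ u ∈ S, ∑ v ∈ Sᶜ, auxW w u v

/-- `b(S)` for `S ⊆ V'`. -/
noncomputable def bSum {V : Type*} (b : V → ℝ) (S : Finset (V ⊕ V)) : ℝ :=
  ∑ u ∈ S, auxB b u

/-- The cut weight of `L⁺ ∪ R⁻` as a double sum over `V` of indicators. -/
lemma cutW_eq_sum {V : Type*} [Fintype V] [DecidableEq V] (w : V → V → ℝ) (L R : Finset V) :
    cutW w ((L.image Sum.inl) ∪ (R.image Sum.inr)) =
      ∑ i, ∑ j, w i j * ((if i ∈ L ∧ j ∉ R then 1 else 0) + (if i ∈ R ∧ j ∉ L then 1 else 0)) := by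
  have key : ∀ T : Finset (V ⊕ V), cutW w T =
      ∑ u, ∑ v, if u ∈ T ∧ v ∉ T then auxW w u v else 0 := by
    intro T
    rw [cutW, ← Finset.sum_filter_add_sum_filter_not univ (· ∈ T)]
    simp [ite_and, Finset.sum_ite, Finset.compl_eq_univ_sdiff, Finset.filter_notMem_eq_sdiff]
  rw [key]
  simp only [Fintype.sum_sum_type, ← Finset.sum_add_distrib]
  simp only [auxW, ite_self, zero_add, add_zero]
  refine Finset.sum_congr rfl fun i _ => Finset.sum_congr rfl fun j _ => ?_
  simp [mul_add]

lemma bSum_eq_sum {V : Type*} [Fintype V] [DecidableEq V] (b : V → ℝ) (L R : Finset V) :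
    bSum b ((L.image Sum.inl) ∪ (R.image Sum.inr)) =
      ∑ i, b i * ((if i ∈ L then 1 else 0) + (if i ∈ R then 1 else 0)) := by
  have hd : Disjoint (L.image (Sum.inl : V → V ⊕ V)) (R.image Sum.inr) := by
    simp [Finset.disjoint_left]
  rw [bSum, Finset.sum_union hd, Finset.sum_image (by simp), Finset.sum_image (by simp)]
  simp [auxB, mul_add, Finset.sum_add_distrib]

lemma betaB_eq_cutW_div_bSum {V : Type*} [Fintype V] [DecidableEq V]
    (w : V → V → ℝ) (hw_symm : ∀ i j, w i j = w j i) (b : V → ℝ)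
    (x : V → ℝ) (hx : ∀ i, x i = 0 ∨ x i = 1 ∨ x i = -1) :
    betaB w b x =
        cutW w (((univ.filter fun i => x i = 1).image Sum.inl) ∪
                ((univ.filter fun i => x i = -1).image Sum.inr)) /
        bSum b (((univ.filter fun i => x i = 1).image Sum.inl) ∪
                ((univ.filter fun i => x i = -1).image Sum.inr)) := by
  rw [cutW_eq_sum, bSum_eq_sum, betaB]
  congr 1
  -- Average the cut sum with its transpose, then compare termwise.
  · have half : ∀ f : V → V → ℝ, ∑ i, ∑ j, f i j = (1 / 2) * ∑ i, ∑ j, (f i j + f j i) := by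
      intro f
      simp only [Finset.sum_add_distrib]
      rw [Finset.sum_comm (s := univ) (t := univ) (f := fun i j => f j i)]
      ring
    refine Eq.trans ?_ (half _).symm
    congr 1
    refine Finset.sum_congr rfl fun i _ => ?_
    refine Finset.sum_congr rfl fun j _ => ?_
    rw [hw_symm j i, ← mul_add]
    congr 1
    rcases hx i with h | h | h <;> rcases hx j with h' | h' | h' <;>
      simp only [Finset.mem_filter, Finset.mem_univ, true_and, h, h'] <;> norm_num
  · refine Finset.sum_congr rfl fun i _ => ?_
    congr 1
    rcases hx i with h | h | h <;>
      simp only [Finset.mem_filter, Finset.mem_univ, true_and, h] <;> norm_num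

/-- For every nonzero `x ∈ {0,±1}^V`, with `L = {i : x i = 1}`,
`R = {i : x i = -1}` and `S = L⁺ ∪ R⁻`, one has `β_b(x) = w(E'(S, V'∖S)) / b(S)`;
consequently the `b`-bipartiteness ratio of `G` equals the minimum of
`w(E'(S, V'∖S)) / b(S)` over all `S = L⁺ ∪ R⁻` with `L, R ⊆ V` disjoint, `L ∪ R ≠ ∅`. -/
theorem stmt_0 {V : Type*} [Fintype V] [DecidableEq V] [Nonempty V]
    (w : V → V → ℝ) (hw_symm : ∀ i j, w i j = w j i) (hw_nonneg : ∀ i j, 0 ≤ w i j)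
    (hw_loop : ∀ i, w i i = 0)
    (b : V → ℝ) (hb : ∀ i, 0 < b i) :
    (∀ x : V → ℝ, (∀ i, x i = 0 ∨ x i = 1 ∨ x i = -1) → x ≠ 0 →
      betaB w b x =
        cutW w (((univ.filter fun i => x i = 1).image Sum.inl) ∪
                ((univ.filter fun i => x i = -1).image Sum.inr)) /
        bSum b (((univ.filter fun i => x i = 1).image Sum.inl) ∪
                ((univ.filter fun i => x i = -1).image Sum.inr))) ∧
    sInf {y : ℝ | ∃ x : V → ℝ, (∀ i, x i = 0 ∨ x i = 1 ∨ x i = -1) ∧ x ≠ 0 ∧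
        y = betaB w b x} =
    sInf {y : ℝ | ∃ L R : Finset V, Disjoint L R ∧ (L ∪ R).Nonempty ∧
        y = cutW w ((L.image Sum.inl) ∪ (R.image Sum.inr)) /
            bSum b ((L.image Sum.inl) ∪ (R.image Sum.inr))} := by
  have main := betaB_eq_cutW_div_bSum w hw_symm b
  refine ⟨fun x hx _ => main x hx, ?_⟩
  congr 1
  ext y
  constructor
  · rintro ⟨x, hx, hx0, rfl⟩
    refine ⟨_, _, ?_, ?_, main x hx⟩
    · rw [Finset.disjoint_left]
      intro i hi hi'
      simp only [Finset.mem_filter, Finset.mem_univ, true_and] at hi hi'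
      linarith
    · obtain ⟨i, hi⟩ := Function.ne_iff.mp hx0
      refine ⟨i, ?_⟩
      simpa using (hx i).resolve_left hi
  · rintro ⟨L, R, hd, ⟨k, hk⟩, rfl⟩
    -- The inverse of `x ↦ (L, R)`: the sign vector `1_L - 1_R`.
    let x : V → ℝ := fun i => if i ∈ L then 1 else if i ∈ R then -1 else 0
    have hx : ∀ i, x i = 0 ∨ x i = 1 ∨ x i = -1 := by
      intro i
      simp only [x]
      split_ifs <;> simp
    have hL : (univ.filter fun i => x i = 1) = L := by
      ext i
      simp only [x, Finset.mem_filter, Finset.mem_univ, true_and]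
      split_ifs with h1 h2 <;> norm_num [h1]
    have hR : (univ.filter fun i => x i = -1) = R := by
      ext i
      simp only [x, Finset.mem_filter, Finset.mem_univ, true_and]
      split_ifs with h1 h2
      · norm_num [Finset.disjoint_left.mp hd h1]
      · simp [h2]
      · norm_num [h2]
    refine ⟨x, hx, ?_, ?_⟩
    · intro h0
      have hk0 : x k = 0 := congrFun h0 k
      rcases Finset.mem_union.mp hk with h | h
      · simp [x, h] at hk0
      · simp [x, h, Finset.disjoint_right.mp hd h] at hk0
    · rw [main x hx, hL, hR]
end

section
/- Let W : V×V → ℝ be a symmetric matrix with nonnegative entries (self-loops allowed), let D_W be the diagonal matrix with (D_W)_{ii} = Σ_{j∈V} W_{ij}, and let D_b be the diagonal matrix with entries b(i) > 0. Define β_b(H) := min over nonzero x ∈ {0,±1}^V of (½·Σ_{i,j∈V} W_{ij}·|x_i + x_j|) / (Σ_{i∈V} b(i)·|x_i|). Then β_b(H) ≥ ½·λ_min( D_b^{−1/2} (D_W + W) D_b^{−1/2} ), where λ_min denotes the smallest eigenvalue of the real symmetric matrix. -/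
open Finset

/-!
Test the quadratic form of `M = D_b^{-1/2} (D_W + W) D_b^{-1/2}` on `y = D_b^{1/2} x`. It equals
`xᵀ (D_W + W) x = (1/2) ∑ W i j (x i + x j)²`, while `yᵀ y = ∑ b i (x i)² = ∑ b i |x i|` because
the entries of `x` lie in `{0, ±1}`. For the same reason `|x i + x j| ≤ 2`, so
`(x i + x j)² ≤ 2 |x i + x j|` and `yᵀ M y ≤ ∑ W i j |x i + x j|`. The Rayleigh bound
`λ_min yᵀ y ≤ yᵀ M y` (`iInf_eigenvalues_mul_le`) then gives the claim after division by
`2 ∑ b i |x i|`.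
-/

open Matrix in
/-- The Rayleigh bound: by the spectral theorem `M - λ_min` is unitarily conjugate to the diagonal
matrix of the numbers `λ i - λ_min ≥ 0`, hence positive semidefinite. -/
lemma iInf_eigenvalues_mul_le {V : Type*} [Fintype V] [DecidableEq V]
    {M : Matrix V V ℝ} (hM : M.IsHermitian) (y : V → ℝ) :
    (⨅ i, hM.eigenvalues i) * (y ⬝ᵥ y) ≤ y ⬝ᵥ (M *ᵥ y) := by
  set l := ⨅ i, hM.eigenvalues i with hl
  set U : Matrix V V ℝ := (hM.eigenvectorUnitary : Matrix V V ℝ) with hU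
  have hUU : U * Uᴴ = 1 := Unitary.coe_mul_star_self hM.eigenvectorUnitary
  have hspec : M = U * diagonal hM.eigenvalues * Uᴴ := by
    simpa [Unitary.conjStarAlgAut_apply, Function.comp_def, star_eq_conjTranspose]
      using hM.spectral_theorem
  have hdiag : (diagonal (fun i => hM.eigenvalues i - l)).PosSemidef :=
    PosSemidef.diagonal fun i =>
      sub_nonneg.2 (ciInf_le (Set.finite_range hM.eigenvalues).bddBelow i)
  have hsub : M - l • 1 = U * diagonal (fun i => hM.eigenvalues i - l) * Uᴴ := by
    have hd : diagonal (fun i => hM.eigenvalues i - l)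
        = diagonal hM.eigenvalues - l • (1 : Matrix V V ℝ) := by
      rw [smul_one_eq_diagonal, diagonal_sub]
    rw [hd, mul_sub, sub_mul, ← hspec, mul_smul_comm, smul_mul_assoc, mul_one, hUU]
  have h := (hdiag.mul_mul_conjTranspose_same U).dotProduct_mulVec_nonneg y
  rw [← hsub, sub_mulVec, smul_mulVec, one_mulVec, dotProduct_sub, dotProduct_smul,
    star_trivial, smul_eq_mul] at h
  linarith

open Matrix in
/-- The quadratic form of the signless Laplacian as a sum over ordered pairs. -/
lemma dotProduct_signlessLaplacian_mulVec {V : Type*} [Fintype V] [DecidableEq V]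
    (W : Matrix V V ℝ) (hW : ∀ i j, W i j = W j i) (x : V → ℝ) :
    x ⬝ᵥ ((diagonal (fun i => ∑ j, W i j) + W) *ᵥ x)
      = (1 / 2) * ∑ i, ∑ j, W i j * (x i + x j) ^ 2 := by
  have hL : x ⬝ᵥ ((diagonal (fun i => ∑ j, W i j) + W) *ᵥ x)
      = ∑ i, ∑ j, W i j * x i ^ 2 + ∑ i, ∑ j, W i j * (x i * x j) := by
    rw [add_mulVec, dotProduct_add]
    congr 1
    · simp only [dotProduct, mulVec_diagonal, ← Finset.sum_mul]
      exact Finset.sum_congr rfl fun i _ => by ring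
    · simp only [dotProduct, mulVec, Finset.mul_sum]
      exact Finset.sum_congr rfl fun i _ => Finset.sum_congr rfl fun j _ => by ring
  have hswap : ∑ i, ∑ j, W i j * x j ^ 2 = ∑ i, ∑ j, W i j * x i ^ 2 := by
    rw [Finset.sum_comm]
    exact Finset.sum_congr rfl fun i _ => Finset.sum_congr rfl fun j _ => by rw [hW]
  have hR : ∑ i, ∑ j, W i j * (x i + x j) ^ 2
      = ∑ i, ∑ j, W i j * x i ^ 2 + 2 * ∑ i, ∑ j, W i j * (x i * x j)
        + ∑ i, ∑ j, W i j * x j ^ 2 := by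
    simp only [Finset.mul_sum, ← Finset.sum_add_distrib]
    exact Finset.sum_congr rfl fun i _ => Finset.sum_congr rfl fun j _ => by ring
  rw [hL, hR, hswap]
  ring

open scoped Matrix

/-- For a weighted multigraph `H` on `V` with symmetric nonnegative
adjacency matrix `W` (self-loops allowed), degree matrix `D_W` and positive vertex
weights `b`, the ratio `β_b(H)` is at least half the smallest eigenvalue of
`D_b^{-1/2} (D_W + W) D_b^{-1/2}`; i.e. every nonzero `x ∈ {0,±1}^V` satisfies
`(1/2)·λ_min ≤ β_b(x)`. -/
theorem stmt_3 {V : Type*} [Fintype V] [DecidableEq V] [Nonempty V]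
    (W : Matrix V V ℝ) (hW_symm : ∀ i j, W i j = W j i) (hW_nonneg : ∀ i j, 0 ≤ W i j)
    (b : V → ℝ) (hb : ∀ i, 0 < b i)
    (M : Matrix V V ℝ)
    (hM : M = Matrix.diagonal (fun i => (Real.sqrt (b i))⁻¹) *
      (Matrix.diagonal (fun i => ∑ j, W i j) + W) *
      Matrix.diagonal (fun i => (Real.sqrt (b i))⁻¹))
    (hHerm : M.IsHermitian)
    (x : V → ℝ) (hx : ∀ i, x i = 0 ∨ x i = 1 ∨ x i = -1) (hx0 : x ≠ 0) :
    (1 / 2) * (⨅ i, hHerm.eigenvalues i) ≤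
      ((1 / 2) * ∑ i, ∑ j, W i j * |x i + x j|) / (∑ i, b i * |x i|) := by
  have habs : ∀ i, |x i| ≤ 1 ∧ x i ^ 2 = |x i| := fun i => by
    rcases hx i with h | h | h <;> simp [h]
  have hB : 0 < ∑ i, b i * |x i| := by
    obtain ⟨k, hk⟩ := Function.ne_iff.1 hx0
    exact Finset.sum_pos' (fun i _ => mul_nonneg (hb i).le (abs_nonneg _))
      ⟨k, Finset.mem_univ k, mul_pos (hb k) (abs_pos.2 hk)⟩
  set y : V → ℝ := fun i => Real.sqrt (b i) * x i with hy
  have hyx : Matrix.diagonal (fun i => (Real.sqrt (b i))⁻¹) *ᵥ y = x := by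
    ext i
    rw [Matrix.mulVec_diagonal, hy]
    exact inv_mul_cancel_left₀ (Real.sqrt_pos.2 (hb i)).ne' _
  have hyy : y ⬝ᵥ y = ∑ i, b i * |x i| := by
    refine Finset.sum_congr rfl fun i _ => ?_
    rw [← (habs i).2, hy]
    linear_combination x i ^ 2 * Real.sq_sqrt (hb i).le
  have hyM : y ⬝ᵥ (M *ᵥ y) = (1 / 2) * ∑ i, ∑ j, W i j * (x i + x j) ^ 2 := by
    rw [← dotProduct_signlessLaplacian_mulVec W hW_symm x, hM, ← Matrix.mulVec_mulVec, hyx,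
      ← Matrix.mulVec_mulVec, Matrix.dotProduct_mulVec, ← Matrix.mulVec_transpose,
      Matrix.diagonal_transpose, hyx]
  have hle : ∑ i, ∑ j, W i j * (x i + x j) ^ 2 ≤ 2 * ∑ i, ∑ j, W i j * |x i + x j| := by
    simp only [Finset.mul_sum]
    refine Finset.sum_le_sum fun i _ => Finset.sum_le_sum fun j _ => ?_
    have h2 : |x i + x j| ≤ 2 := by
      linarith [abs_add_le (x i) (x j), (habs i).1, (habs j).1]
    have h3 : (x i + x j) ^ 2 ≤ 2 * |x i + x j| := by
      rw [← sq_abs, sq]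
      exact mul_le_mul_of_nonneg_right h2 (abs_nonneg _)
    linarith [mul_le_mul_of_nonneg_left h3 (hW_nonneg i j)]
  have hray := iInf_eigenvalues_mul_le hHerm y
  rw [hyy, hyM] at hray
  rw [le_div_iff₀ hB]
  linarith
end

section
/- For all real numbers η ∈ (0,1), ρ ∈ [0,1) with η ≤ 1−ρ, and η' ∈ (0,1) with η'·(1−ρ) ≤ η, the inequality ρ·η + (1−ρ)·η'·log(3/η') ≤ η·log(3/η) holds. -/
/-!
The function `x ↦ x * log (3 / x)` is increasing on `(0, 1]` (`mul_log_three_div_mono`, which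
rests on `log 3 ≥ 1`). Write `t = 1 - ρ`. Since `η' ≤ η / t ≤ 1`, replacing `η'` by `η / t` only
increases the left-hand side, which then equals `(1 - t) * η + η * log (3 / η) + η * log t`;
the inequality `log t ≤ t - 1` finishes the proof.
-/

/-- Monotonicity of `x ↦ x * log (3 / x)` on `(0, 1]`: since `a * log (b / a) ≤ b - a`, the
increment from `a` to `b` is at least `(b - a) * (log (3 / b) - 1)`, and `log (3 / b) ≥ log 3 ≥ 1`. -/
lemma mul_log_three_div_mono {a b : ℝ} (ha : 0 < a) (hab : a ≤ b) (hb : b ≤ 1) :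
    a * Real.log (3 / a) ≤ b * Real.log (3 / b) := by
  have hb0 : 0 < b := ha.trans_le hab
  have h1 : 1 ≤ Real.log (3 / b) := by
    rw [Real.le_log_iff_exp_le (by positivity), le_div_iff₀ hb0]
    nlinarith [Real.exp_one_lt_d9, Real.exp_pos 1]
  have h2 : Real.log (3 / a) = Real.log (3 / b) + Real.log (b / a) := by
    rw [← Real.log_mul (by positivity) (by positivity)]
    congr 1
    field_simp
  have h3 : a * Real.log (b / a) ≤ b - a := by
    calc a * Real.log (b / a) ≤ a * (b / a - 1) :=
          mul_le_mul_of_nonneg_left (Real.log_le_sub_one_of_pos (by positivity)) ha.le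
      _ = b - a := by field_simp
  rw [h2]
  nlinarith [mul_nonneg (sub_nonneg.2 hab) (sub_nonneg.2 h1)]

/-- For `η ∈ (0,1)`, `ρ ∈ [0,1)` with `η ≤ 1−ρ`, and `η' ∈ (0,1)` with
`η'·(1−ρ) ≤ η`, one has `ρ·η + (1−ρ)·η'·log(3/η') ≤ η·log(3/η)`. -/
theorem stmt_11 (η ρ η' : ℝ) (hη0 : 0 < η) (hη1 : η < 1)
    (hρ0 : 0 ≤ ρ) (hρ1 : ρ < 1) (hηρ : η ≤ 1 - ρ)
    (hη'0 : 0 < η') (hη'1 : η' < 1) (hη' : η' * (1 - ρ) ≤ η) :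
    ρ * η + (1 - ρ) * η' * Real.log (3 / η') ≤ η * Real.log (3 / η) := by
  have ht : 0 < 1 - ρ := sub_pos.2 hρ1
  have hmono := mul_log_three_div_mono hη'0 ((le_div_iff₀ ht).2 hη') ((div_le_one ht).2 hηρ)
  have hlog : Real.log (3 / (η / (1 - ρ))) = Real.log (3 / η) + Real.log (1 - ρ) := by
    rw [← Real.log_mul (by positivity) ht.ne']
    congr 1
    field_simp
  have hlt : η * Real.log (1 - ρ) ≤ η * (1 - ρ - 1) :=
    mul_le_mul_of_nonneg_left (Real.log_le_sub_one_of_pos ht) hη0.le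
  calc ρ * η + (1 - ρ) * η' * Real.log (3 / η')
      = ρ * η + (1 - ρ) * (η' * Real.log (3 / η')) := by ring
    _ ≤ ρ * η + (1 - ρ) * (η / (1 - ρ) * Real.log (3 / (η / (1 - ρ)))) := by gcongr
    _ = ρ * η + η * (Real.log (3 / η) + Real.log (1 - ρ)) := by
        rw [hlog, ← mul_assoc, mul_div_cancel₀ _ ht.ne']
    _ ≤ η * Real.log (3 / η) := by linarith
end
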